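/- Let 𝒮 ⊂ ℝ³ be a smooth embedded surface and let (v₋, v₊) satisfy the CVS conditions (1)–(5) with |v₊|² = |v₋|² on 𝒮. Then for every point q ∈ 𝒮 at least one of the following holds: (a) the Gauss curvature of 𝒮 vanishes at q (equivalently, the differential at q of the Gauss map n : 𝒮 → S² is singular); (b) v₊(q) = v₋(q); (c) v₊(q) = −v₋(q). -/

import Mathlib

noncomputable section

open MeasureTheory Filter Set
open scoped RealInnerProductSpace Topology

abbrev E3 : Type := EuclideanSpace ℝ (Fin 3)
abbrev E2 : Type := EuclideanSpace ℝ (Fin 2)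

def mk3 (a b c : ℝ) : E3 := (EuclideanSpace.equiv (Fin 3) ℝ).symm ![a, b, c]

def e3 (i : Fin 3) : E3 := EuclideanSpace.single i 1

/-- `∂_j v_i` at `p`. -/
def pder (v : E3 → E3) (i j : Fin 3) (p : E3) : ℝ := fderiv ℝ v p (e3 j) i

def div3 (v : E3 → E3) (p : E3) : ℝ := ∑ i, pder v i i p

def curl3 (v : E3 → E3) (p : E3) : E3 :=
  mk3 (pder v 2 1 p - pder v 1 2 p) (pder v 0 2 p - pder v 2 0 p)
    (pder v 1 0 p - pder v 0 1 p)

def lap3 (f : E3 → ℝ) (p : E3) : ℝ :=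
  ∑ j, fderiv ℝ (fun x => fderiv ℝ f x (e3 j)) p (e3 j)

def IsTangentAt (S : Set E3) (p v : E3) : Prop :=
  ∃ γ : ℝ → E3, (∀ t, γ t ∈ S) ∧ γ 0 = p ∧ HasDerivAt γ v 0

def IsSurface (k : ℕ∞) (S : Set E3) : Prop :=
  ∀ p ∈ S, ∃ (f : E2 → E3) (U : Set E2) (V : Set E3),
    IsOpen U ∧ IsOpen V ∧ p ∈ V ∧ ContDiffOn ℝ k f U ∧ Set.InjOn f U ∧
    f '' U = S ∩ V ∧ ∀ x ∈ U, Function.Injective (fderiv ℝ f x)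

structure CVSBase (S Ωm Ωp : Set E3) (vm vp : E3 → E3) : Prop where
  openm : IsOpen Ωm
  openp : IsOpen Ωp
  disj : Disjoint Ωm Ωp
  disjm : Disjoint Ωm S
  disjp : Disjoint Ωp S
  clm : S ⊆ closure Ωm
  clp : S ⊆ closure Ωp
  smoothm : ∃ W, IsOpen W ∧ Ωm ∪ S ⊆ W ∧ ContDiffOn ℝ 1 vm W
  smoothp : ∃ W, IsOpen W ∧ Ωp ∪ S ⊆ W ∧ ContDiffOn ℝ 1 vp W
  divm : ∀ p ∈ Ωm, div3 vm p = 0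
  divp : ∀ p ∈ Ωp, div3 vp p = 0
  curlm : ∀ p ∈ Ωm, curl3 vm p = 0
  curlp : ∀ p ∈ Ωp, curl3 vp p = 0
  tangentm : ∀ p ∈ S, IsTangentAt S p (vm p)
  tangentp : ∀ p ∈ S, IsTangentAt S p (vp p)

structure CVSPair (S Ωm Ωp : Set E3) (vm vp : E3 → E3)
    extends CVSBase S Ωm Ωp vm vp : Prop where
  strain : ∀ p ∈ S, (fderiv ℝ vp p + fderiv ℝ vm p) (vp p - vm p) = 0
  bernoulli : ∀ p ∈ S, ∀ᶠ q in 𝓝[S] p,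
    ‖vp q‖ ^ 2 - ‖vm q‖ ^ 2 = ‖vp p‖ ^ 2 - ‖vm p‖ ^ 2

/-- the open region `Ωm` is the bounded region enclosed by the closed surface `S`,
and `Ωp` is its exterior. -/
structure EnclosedBy (S Ωm Ωp : Set E3) : Prop where
  openm : IsOpen Ωm
  bounded : Bornology.IsBounded Ωm
  fr : frontier Ωm = S
  plus : Ωp = (Ωm ∪ S)ᶜ

/-!
Put `u = v₊ + v₋` and `w = v₊ - v₋`. Equality of the norms says that `u ⟂ w` along `S`, and
condition (4) says `Du·w = 0`. Symmetry of the second fundamental form turns this into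
`⟪n, Dw·u⟫ = 0`; differentiating `⟪u, w⟫ = 0` along `Dw·u`, which is thus tangent, and using that
`Du` and `Dw` are symmetric gives `Dw·u = 0`.

Suppose that `u` and `w` do not vanish at `q` and that the curvature is nonzero there, and put
`N = n q`. The derivatives at `q` of the functions `s = ⟪N, u⟫` and `t = ⟪N, w⟫` on `S` are
`z ↦ -⟪Dn z, u⟫` and `z ↦ -⟪Dn z, w⟫`, so `(s, t)` are local coordinates on `S`. As `Du` has a
kernel on each tangent plane, on which `ds` must vanish, `u` is a function of `s` alone; likewise
`w` is a function of `t` alone. Differentiating `⟪u(s), w(t)⟫ = 0` yields `u' ⟂ w`, `u ⟂ w'` and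
`u' ⟂ w'`. But in the orthogonal frame `(u, w, N)` the first two relations leave only the
`N`-components in `⟪u', w'⟫`, and these are both `1`, so `⟪u', w'⟫ = 1`.
-/

section OrthogonalFamily

variable {ι F : Type*} [Fintype ι] [NormedAddCommGroup F] [InnerProductSpace ℝ F]

theorem inner_eq_sum_of_pairwise_orthogonal [FiniteDimensional ℝ F] {v : ι → F} (hne : ∀ i, v i ≠ 0)
    (horth : Pairwise fun i j => ⟪v i, v j⟫ = 0) (hcard : Fintype.card ι = Module.finrank ℝ F)
    (x y : F) : ⟪x, y⟫ = ∑ i, ⟪x, v i⟫ * ⟪v i, y⟫ / ‖v i‖ ^ 2 := by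
  have hnormalized : Orthonormal ℝ fun i => ‖v i‖⁻¹ • v i :=
    ⟨fun i => norm_smul_inv_norm (hne i), fun i j hij => by
      simp only [real_inner_smul_left, real_inner_smul_right, horth hij, mul_zero]⟩
  have hspan := hnormalized.linearIndependent.span_eq_top_of_card_eq_finrank' hcard
  rw [← (OrthonormalBasis.mk hnormalized hspan.ge).sum_inner_mul_inner x y]
  refine Finset.sum_congr rfl fun i _ => ?_
  rw [OrthonormalBasis.coe_mk, real_inner_smul_left, real_inner_smul_right]
  ring

theorem inner_eq_of_orthogonal_frame {a b n : F} (hF : Module.finrank ℝ F = 3) (ha : a ≠ 0)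
    (hb : b ≠ 0) (hn : ‖n‖ = 1) (hab : ⟪a, b⟫ = 0) (hna : ⟪n, a⟫ = 0) (hnb : ⟪n, b⟫ = 0)
    (x y : F) :
    ⟪x, y⟫ = ⟪x, a⟫ * ⟪a, y⟫ / ‖a‖ ^ 2 + ⟪x, b⟫ * ⟪b, y⟫ / ‖b‖ ^ 2 + ⟪x, n⟫ * ⟪n, y⟫ := by
  have : FiniteDimensional ℝ F := Module.finite_of_finrank_eq_succ hF
  have hn0 : n ≠ 0 := norm_ne_zero_iff.1 (hn ▸ one_ne_zero)
  have hne : ∀ i, ![a, b, n] i ≠ 0 := by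
    simpa [Fin.forall_fin_succ] using ⟨ha, hb, hn0⟩
  have horth : Pairwise fun i j => ⟪![a, b, n] i, ![a, b, n] j⟫ = 0 := by
    intro i j hij
    fin_cases i <;> fin_cases j <;> simp_all [real_inner_comm]
  simpa [Fin.sum_univ_three, hn] using
    inner_eq_sum_of_pairwise_orthogonal hne horth (by simp [hF]) x y

end OrthogonalFamily

section LinearAlgebra

variable {K V V' V'' : Type*} [Field K] [AddCommGroup V] [Module K V]
  [AddCommGroup V'] [Module K V'] [AddCommGroup V''] [Module K V'']

theorem ker_eq_ker_comp_of_finrank_ker_comp_eq_one {A : V →ₗ[K] V'} (l : V' →ₗ[K] V'')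
    (hl : Module.finrank K (l ∘ₗ A).ker = 1) (hA : A.ker ≠ ⊥) : A.ker = (l ∘ₗ A).ker := by
  have : FiniteDimensional K (l ∘ₗ A).ker := Module.finite_of_finrank_eq_succ hl
  have hle : A.ker ≤ (l ∘ₗ A).ker := LinearMap.ker_le_ker_comp A l
  have : FiniteDimensional K A.ker := Submodule.finiteDimensional_of_le hle
  exact Submodule.eq_of_le_of_finrank_le hle
    (hl ▸ Submodule.one_le_finrank_iff.2 hA)

theorem finrank_ker_fst : Module.finrank K (LinearMap.fst K K K).ker = 1 := by
  rw [LinearMap.ker_fst, LinearMap.finrank_range_of_inj LinearMap.inr_injective,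
    Module.finrank_self]

theorem finrank_ker_snd : Module.finrank K (LinearMap.snd K K K).ker = 1 := by
  rw [LinearMap.ker_snd, LinearMap.finrank_range_of_inj LinearMap.inl_injective,
    Module.finrank_self]

end LinearAlgebra

section Calculus

variable {E F G : Type*} [NormedAddCommGroup E] [NormedSpace ℝ E]

section NormedSpace

variable [NormedAddCommGroup F] [NormedSpace ℝ F]

theorem eq_of_fderiv_apply_sub_eq_zero_of_convex {A : E → F} {s : Set E} (hs : Convex ℝ s)
    (hA : ∀ z ∈ s, DifferentiableAt ℝ A z) {x y : E} (hx : x ∈ s) (hy : y ∈ s)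
    (h : ∀ z ∈ s, fderiv ℝ A z (y - x) = 0) : A x = A y := by
  have hmem : ∀ t ∈ Icc (0 : ℝ) 1, AffineMap.lineMap x y t ∈ s := fun t ht =>
    hs.lineMap_mem hx hy ht
  have hderiv : ∀ t ∈ Icc (0 : ℝ) 1, HasDerivAt (A ∘ AffineMap.lineMap x y) (0 : F) t := by
    intro t ht
    rw [← h _ (hmem t ht)]
    exact (hA _ (hmem t ht)).hasFDerivAt.comp_hasDerivAt t AffineMap.hasDerivAt_lineMap
  have hconst := constant_of_has_deriv_right_zero
    (fun t ht => (hderiv t ht).continuousAt.continuousWithinAt)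
    (fun t ht => (hderiv t (Ico_subset_Icc_self ht)).hasDerivWithinAt)
    1 (right_mem_Icc.2 zero_le_one)
  simpa using hconst.symm

theorem exists_contDiffAt_local_inverse [CompleteSpace E] {g : E → F} {g' : E ≃L[ℝ] F} {x : E}
    (hg : ContDiffAt ℝ 1 g x) (hg' : HasFDerivAt g (g' : E →L[ℝ] F) x) :
    ∃ h : F → E, ContDiffAt ℝ 1 h (g x) ∧ h (g x) = x ∧ (∀ᶠ y in 𝓝 (g x), g (h y) = y) ∧
      ∀ᶠ y in 𝓝 (g x), Function.Surjective (fderiv ℝ h y) := by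
  have hstrict := hg.hasStrictFDerivAt' hg' one_ne_zero
  set h := hg.localInverse hg' one_ne_zero
  have hh : ContDiffAt ℝ 1 h (g x) := hg.to_localInverse hg' one_ne_zero
  have hhx : h (g x) = x := hg.localInverse_apply_image hg' one_ne_zero
  have hright : ∀ᶠ y in 𝓝 (g x), g (h y) = y := hstrict.eventually_right_inverse
  have hleft : ∀ᶠ z in 𝓝 x, h (g z) = z := hstrict.eventually_left_inverse
  have htendsto : Tendsto h (𝓝 (g x)) (𝓝 x) := by
    simpa only [hhx] using hh.continuousAt.tendsto
  refine ⟨h, hh, hhx, hright, ?_⟩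
  filter_upwards [hright, htendsto.eventually hleft.eventually_nhds,
    htendsto.eventually (hg.eventually (by simp)), hh.eventually (by simp)]
    with y hy hleft_y hg_y hh_y
  have hcomp : HasFDerivAt (h ∘ g) ((fderiv ℝ h y).comp (fderiv ℝ g (h y))) (h y) :=
    HasFDerivAt.comp (h y) (by rw [hy]; exact (hh_y.differentiableAt one_ne_zero).hasFDerivAt)
      (hg_y.differentiableAt one_ne_zero).hasFDerivAt
  have hid : HasFDerivAt (h ∘ g) (ContinuousLinearMap.id ℝ E) (h y) :=
    (hasFDerivAt_id _).congr_of_eventuallyEq hleft_y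
  exact fun e => ⟨fderiv ℝ g (h y) e, DFunLike.congr_fun (hcomp.unique hid) e⟩

theorem eventually_eq_of_apply_eq_of_ker_fderiv_ne_bot {A : E → F} {x₀ : E}
    (hA : ContDiffAt ℝ 1 A x₀) {l : F →L[ℝ] ℝ} {c : E →L[ℝ] ℝ}
    (hc : Module.finrank ℝ (c : E →ₗ[ℝ] ℝ).ker = 1) (hlA : ∀ᶠ x in 𝓝 x₀, l (A x) = c x)
    (hker : ∀ᶠ x in 𝓝 x₀, (fderiv ℝ A x : E →ₗ[ℝ] F).ker ≠ ⊥) :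
    ∀ᶠ p in 𝓝 x₀ ×ˢ 𝓝 x₀, c p.1 = c p.2 → A p.1 = A p.2 := by
  have hker_eq : ∀ᶠ x in 𝓝 x₀, DifferentiableAt ℝ A x ∧
      (fderiv ℝ A x : E →ₗ[ℝ] F).ker = (c : E →ₗ[ℝ] ℝ).ker := by
    filter_upwards [hA.eventually (by simp), hlA.eventually_nhds, hker] with x hAx hlAx hkx
    have hdiff := hAx.differentiableAt one_ne_zero
    have hcomp : l.comp (fderiv ℝ A x) = c :=
      (l.hasFDerivAt.comp x hdiff.hasFDerivAt).unique
        (c.hasFDerivAt.congr_of_eventuallyEq hlAx)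
    have hcomp' : (l : F →ₗ[ℝ] ℝ) ∘ₗ (fderiv ℝ A x : E →ₗ[ℝ] F) = c := by rw [← hcomp]; rfl
    refine ⟨hdiff, ?_⟩
    rw [ker_eq_ker_comp_of_finrank_ker_comp_eq_one (l : F →ₗ[ℝ] ℝ) (hcomp' ▸ hc) hkx, hcomp']
  obtain ⟨ε, hε, hball⟩ := Metric.eventually_nhds_iff_ball.1 hker_eq
  have hmem := Metric.ball_mem_nhds x₀ hε
  filter_upwards [prod_mem_prod hmem hmem] with p hp hcp
  refine eq_of_fderiv_apply_sub_eq_zero_of_convex (convex_ball x₀ ε) (fun z hz => (hball z hz).1)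
    hp.1 hp.2 fun z hz => ?_
  have hsub : p.2 - p.1 ∈ (c : E →ₗ[ℝ] ℝ).ker := by simp [hcp]
  rw [← (hball z hz).2] at hsub
  exact hsub

theorem ker_fderiv_comp_ne_bot [NormedAddCommGroup G] [NormedSpace ℝ G]
    {A : E → F} {h : G → E} {y : G}
    (hA : DifferentiableAt ℝ A (h y)) (hh : DifferentiableAt ℝ h y)
    (hsurj : Function.Surjective (fderiv ℝ h y))
    (hker : (fderiv ℝ A (h y) : E →ₗ[ℝ] F).ker ≠ ⊥) :
    (fderiv ℝ (A ∘ h) y : G →ₗ[ℝ] F).ker ≠ ⊥ := by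
  obtain ⟨v, hv, hv0⟩ := Submodule.exists_mem_ne_zero_of_ne_bot hker
  obtain ⟨z, rfl⟩ := hsurj v
  refine (Submodule.ne_bot_iff _).2 ⟨z, ?_, fun hz => hv0 (by rw [hz, map_zero])⟩
  rw [fderiv_comp y hA hh]
  exact hv

end NormedSpace

section InnerProductSpace

variable [NormedAddCommGroup F] [InnerProductSpace ℝ F]

theorem inner_eq_of_hasDerivAt_of_eventually {a : ℝ → F} {a' v : F} {φ : ℝ → ℝ} {φ' s : ℝ}
    (ha : HasDerivAt a a' s) (hφ : HasDerivAt φ φ' s) (h : ∀ᶠ s' in 𝓝 s, ⟪v, a s'⟫ = φ s') :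
    ⟪v, a'⟫ = φ' :=
  (((innerSL ℝ v).hasFDerivAt.comp_hasDerivAt s ha).unique (hφ.congr_of_eventuallyEq h) :)

theorem inner_deriv_eq_zero_of_eventually_orthogonal {a b : ℝ → F} {a' b' : F} {s t : ℝ}
    (ha : HasDerivAt a a' s) (hb : HasDerivAt b b' t)
    (h : ∀ᶠ p in 𝓝 s ×ˢ 𝓝 t, ⟪a p.1, b p.2⟫ = 0) :
    ⟪a', b t⟫ = 0 ∧ ⟪a s, b'⟫ = 0 ∧ ⟪a', b'⟫ = 0 := by
  have hb_const : ∀ᶠ t' in 𝓝 t, ⟪a', b t'⟫ = 0 := by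
    filter_upwards [(eventually_swap_iff.1 h).curry] with t' ht'
    rw [real_inner_comm]
    refine inner_eq_of_hasDerivAt_of_eventually ha (hasDerivAt_const s 0) ?_
    simpa only [real_inner_comm, Prod.swap] using ht'
  exact ⟨hb_const.self_of_nhds,
    inner_eq_of_hasDerivAt_of_eventually hb (hasDerivAt_const t 0) h.curry.self_of_nhds,
    inner_eq_of_hasDerivAt_of_eventually hb (hasDerivAt_const t 0) hb_const⟩

theorem exists_orthogonal_derivatives_of_coordinates {A B : ℝ × ℝ → F} {y₀ : ℝ × ℝ} {n : F}
    (hA : ContDiffAt ℝ 1 A y₀) (hB : ContDiffAt ℝ 1 B y₀)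
    (hnA : ∀ᶠ y in 𝓝 y₀, ⟪n, A y⟫ = y.1) (hnB : ∀ᶠ y in 𝓝 y₀, ⟪n, B y⟫ = y.2)
    (hkerA : ∀ᶠ y in 𝓝 y₀, (fderiv ℝ A y : ℝ × ℝ →ₗ[ℝ] F).ker ≠ ⊥)
    (hkerB : ∀ᶠ y in 𝓝 y₀, (fderiv ℝ B y : ℝ × ℝ →ₗ[ℝ] F).ker ≠ ⊥)
    (horth : ∀ᶠ y in 𝓝 y₀, ⟪A y, B y⟫ = 0) :
    ∃ p r : F, ⟪n, p⟫ = 1 ∧ ⟪n, r⟫ = 1 ∧ ⟪p, B y₀⟫ = 0 ∧ ⟪A y₀, r⟫ = 0 ∧ ⟪p, r⟫ = 0 := by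
  obtain ⟨s, t⟩ := y₀
  have hline₁ : HasDerivAt (fun s' : ℝ => (s', t)) (1, 0) s :=
    (hasDerivAt_id s).prodMk (hasDerivAt_const s t)
  have hline₂ : HasDerivAt (fun t' : ℝ => (s, t')) (0, 1) t :=
    (hasDerivAt_const t s).prodMk (hasDerivAt_id t)
  have hA' := (hA.differentiableAt one_ne_zero).hasFDerivAt.comp_hasDerivAt s hline₁
  have hB' := (hB.differentiableAt one_ne_zero).hasFDerivAt.comp_hasDerivAt t hline₂
  have hA_eq : ∀ᶠ y in 𝓝 (s, t), A y = A (y.1, t) := by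
    have hproj : Tendsto (fun y : ℝ × ℝ => (y.1, t)) (𝓝 (s, t)) (𝓝 (s, t)) :=
      Continuous.tendsto (by fun_prop) (s, t)
    have hfactor := eventually_eq_of_apply_eq_of_ker_fderiv_ne_bot (c := .fst ℝ ℝ ℝ)
      (l := innerSL ℝ n) hA finrank_ker_fst hnA hkerA
    exact ((tendsto_id.prodMk hproj).eventually hfactor).mono fun y hy => hy rfl
  have hB_eq : ∀ᶠ y in 𝓝 (s, t), B y = B (s, y.2) := by
    have hproj : Tendsto (fun y : ℝ × ℝ => (s, y.2)) (𝓝 (s, t)) (𝓝 (s, t)) :=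
      Continuous.tendsto (by fun_prop) (s, t)
    have hfactor := eventually_eq_of_apply_eq_of_ker_fderiv_ne_bot (c := .snd ℝ ℝ ℝ)
      (l := innerSL ℝ n) hB finrank_ker_snd hnB hkerB
    exact ((tendsto_id.prodMk hproj).eventually hfactor).mono fun y hy => hy rfl
  have hsep : ∀ᶠ y in 𝓝 s ×ˢ 𝓝 t, ⟪A (y.1, t), B (s, y.2)⟫ = 0 := by
    rw [← nhds_prod_eq]
    filter_upwards [hA_eq, hB_eq, horth] with y hAy hBy hy
    rwa [← hAy, ← hBy]
  exact ⟨_, _,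
    inner_eq_of_hasDerivAt_of_eventually hA' (hasDerivAt_id s) (hline₁.continuousAt.eventually hnA),
    inner_eq_of_hasDerivAt_of_eventually hB' (hasDerivAt_id t) (hline₂.continuousAt.eventually hnB),
    inner_deriv_eq_zero_of_eventually_orthogonal hA' hB' hsep⟩

theorem exists_orthogonal_derivatives {a b : E → F} {x₀ : E} {n : F}
    (hE : Module.finrank ℝ E = 2) (ha : ContDiffAt ℝ 1 a x₀) (hb : ContDiffAt ℝ 1 b x₀)
    (hkera : ∀ᶠ x in 𝓝 x₀, (fderiv ℝ a x : E →ₗ[ℝ] F).ker ≠ ⊥)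
    (hkerb : ∀ᶠ x in 𝓝 x₀, (fderiv ℝ b x : E →ₗ[ℝ] F).ker ≠ ⊥)
    (horth : ∀ᶠ x in 𝓝 x₀, ⟪a x, b x⟫ = 0)
    (hinj : ∀ e, ⟪n, fderiv ℝ a x₀ e⟫ = 0 → ⟪n, fderiv ℝ b x₀ e⟫ = 0 → e = 0) :
    ∃ p r : F, ⟪n, p⟫ = 1 ∧ ⟪n, r⟫ = 1 ∧ ⟪p, b x₀⟫ = 0 ∧ ⟪a x₀, r⟫ = 0 ∧ ⟪p, r⟫ = 0 := by
  have : FiniteDimensional ℝ E := Module.finite_of_finrank_eq_succ hE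
  have : CompleteSpace E := FiniteDimensional.complete ℝ E
  set g : E → ℝ × ℝ := fun x => (⟪n, a x⟫, ⟪n, b x⟫)
  have hg : ContDiffAt ℝ 1 g x₀ :=
    (contDiffAt_const.inner ℝ ha).prodMk (contDiffAt_const.inner ℝ hb)
  set g' : E →L[ℝ] ℝ × ℝ :=
    ((innerSL ℝ n).comp (fderiv ℝ a x₀)).prod ((innerSL ℝ n).comp (fderiv ℝ b x₀))
  have hg' : HasFDerivAt g g' x₀ :=
    ((innerSL ℝ n).hasFDerivAt.comp x₀ (ha.differentiableAt one_ne_zero).hasFDerivAt).prodMk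
      ((innerSL ℝ n).hasFDerivAt.comp x₀ (hb.differentiableAt one_ne_zero).hasFDerivAt)
  have hg'_inj : Function.Injective g' := (injective_iff_map_eq_zero g').2 fun e he =>
    hinj e (congrArg Prod.fst he) (congrArg Prod.snd he)
  obtain ⟨h, hh, hhx, hgh, hsurj⟩ := exists_contDiffAt_local_inverse
    (g' := (LinearEquiv.ofInjectiveOfFinrankEq (g' : E →ₗ[ℝ] ℝ × ℝ) hg'_inj
      (by simp [hE])).toContinuousLinearEquiv) hg hg'
  have hh_tendsto : Tendsto h (𝓝 (g x₀)) (𝓝 x₀) := by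
    simpa only [hhx] using hh.continuousAt.tendsto
  have hker : ∀ {c : E → F}, ContDiffAt ℝ 1 c x₀ →
      (∀ᶠ x in 𝓝 x₀, (fderiv ℝ c x : E →ₗ[ℝ] F).ker ≠ ⊥) →
      ∀ᶠ y in 𝓝 (g x₀), (fderiv ℝ (c ∘ h) y : ℝ × ℝ →ₗ[ℝ] F).ker ≠ ⊥ := by
    intro c hc hkerc
    filter_upwards [hh_tendsto.eventually (hc.eventually (by simp)), hh.eventually (by simp),
      hsurj, hh_tendsto.eventually hkerc] with y hcy hhy hsurjy hkery
    exact ker_fderiv_comp_ne_bot (hcy.differentiableAt one_ne_zero)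
      (hhy.differentiableAt one_ne_zero) hsurjy hkery
  simpa only [Function.comp_apply, hhx] using exists_orthogonal_derivatives_of_coordinates
    (ContDiffAt.comp (g x₀) (hhx.symm ▸ ha) hh) (ContDiffAt.comp (g x₀) (hhx.symm ▸ hb) hh)
    (hgh.mono fun y hy => congrArg Prod.fst hy) (hgh.mono fun y hy => congrArg Prod.snd hy)
    (hker ha hkera) (hker hb hkerb) (hh_tendsto.eventually horth)

theorem exists_ne_zero_inner_fderiv_eq_zero {a b : E → F} {x₀ : E} {n : F}
    (hE : Module.finrank ℝ E = 2) (hF : Module.finrank ℝ F = 3)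
    (ha : ContDiffAt ℝ 1 a x₀) (hb : ContDiffAt ℝ 1 b x₀)
    (hkera : ∀ᶠ x in 𝓝 x₀, (fderiv ℝ a x : E →ₗ[ℝ] F).ker ≠ ⊥)
    (hkerb : ∀ᶠ x in 𝓝 x₀, (fderiv ℝ b x : E →ₗ[ℝ] F).ker ≠ ⊥)
    (horth : ∀ᶠ x in 𝓝 x₀, ⟪a x, b x⟫ = 0) (ha0 : a x₀ ≠ 0) (hb0 : b x₀ ≠ 0)
    (hn : ‖n‖ = 1) (hna : ⟪n, a x₀⟫ = 0) (hnb : ⟪n, b x₀⟫ = 0) :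
    ∃ e ≠ 0, ⟪n, fderiv ℝ a x₀ e⟫ = 0 ∧ ⟪n, fderiv ℝ b x₀ e⟫ = 0 := by
  by_contra! hinj
  obtain ⟨p, r, hnp, hnr, hpb, har, hpr⟩ :=
    exists_orthogonal_derivatives hE ha hb hkera hkerb horth
      fun e hae hbe => by_contra fun he => hinj e he hae hbe
  have hpr_one : ⟪p, r⟫ = 1 := by
    rw [inner_eq_of_orthogonal_frame hF ha0 hb0 hn horth.self_of_nhds hna hnb p r, har, hpb,
      real_inner_comm n p, hnp, hnr]
    ring
  exact zero_ne_one (hpr ▸ hpr_one)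

end InnerProductSpace

end Calculus

section SecondFundamentalForm

variable {E F : Type*} [NormedAddCommGroup E] [NormedSpace ℝ E]
  [NormedAddCommGroup F] [InnerProductSpace ℝ F]

theorem inner_fderiv_normal_comm {f N : E → F} {x : E} (hf : ContDiffAt ℝ 2 f x)
    (hN : DifferentiableAt ℝ N x) (hnormal : ∀ᶠ y in 𝓝 x, ∀ e, ⟪N y, fderiv ℝ f y e⟫ = 0)
    (e e' : E) : ⟪fderiv ℝ N x e, fderiv ℝ f x e'⟫ = ⟪fderiv ℝ N x e', fderiv ℝ f x e⟫ := by
  have hsymm : IsSymmSndFDerivAt ℝ f x := hf.isSymmSndFDerivAt (by simp)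
  have hf' : DifferentiableAt ℝ (fderiv ℝ f) x :=
    (hf.fderiv_right (m := 1) (by norm_num)).differentiableAt one_ne_zero
  have hdiff_normal : ∀ e e', ⟪N x, fderiv ℝ (fderiv ℝ f) x e e'⟫
      + ⟪fderiv ℝ N x e, fderiv ℝ f x e'⟫ = 0 := by
    intro e e'
    have hconst : (fun y => ⟪N y, fderiv ℝ f y e'⟫) =ᶠ[𝓝 x] fun _ => 0 :=
      hnormal.mono fun y hy => hy e'
    have happly : fderiv ℝ (fun y => fderiv ℝ f y e') x e = fderiv ℝ (fderiv ℝ f) x e e' := by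
      simp [fderiv_clm_apply hf' (differentiableAt_const e')]
    rw [← happly, ← fderiv_inner_apply ℝ hN (hf'.clm_apply (differentiableAt_const e')),
      hconst.fderiv_eq, fderiv_fun_const, Pi.zero_apply, zero_apply]
  linarith [hdiff_normal e e', hdiff_normal e' e, congrArg (⟪N x, ·⟫) (hsymm e e')]

end SecondFundamentalForm

section Tangent

variable {S : Set E3} {p z : E3}

namespace IsTangentAt

theorem fderiv_eq_zero {φ : E3 → ℝ} {c : ℝ} (hz : IsTangentAt S p z)
    (hφ : DifferentiableAt ℝ φ p) (hconst : ∀ q ∈ S, φ q = c) : fderiv ℝ φ p z = 0 := by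
  obtain ⟨γ, hγ, rfl, hγ'⟩ := hz
  have hcomp : φ ∘ γ = fun _ => c := funext fun t => hconst _ (hγ t)
  exact (hφ.hasFDerivAt.comp_hasDerivAt 0 hγ').unique (hcomp ▸ hasDerivAt_const 0 c)

theorem inner_fderiv_eq_neg {v w : E3 → E3} {c : ℝ} (hz : IsTangentAt S p z)
    (hv : DifferentiableAt ℝ v p) (hw : DifferentiableAt ℝ w p)
    (hconst : ∀ q ∈ S, ⟪v q, w q⟫ = c) : ⟪v p, fderiv ℝ w p z⟫ = -⟪fderiv ℝ v p z, w p⟫ := by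
  rw [eq_neg_iff_add_eq_zero, ← fderiv_inner_apply ℝ hv hw]
  exact hz.fderiv_eq_zero (hv.inner ℝ hw) hconst

end IsTangentAt

theorem isTangentAt_of_hasDerivAt_of_eventually_mem {γ : ℝ → E3} (hγ : HasDerivAt γ z 0)
    (hmem : ∀ᶠ t in 𝓝 0, γ t ∈ S) : IsTangentAt S (γ 0) z := by
  classical
  -- `IsTangentAt` asks for a curve that stays in `S` for all times, so freeze it off `S`.
  refine ⟨fun t => if γ t ∈ S then γ t else γ 0, fun t => ?_, ite_self _, ?_⟩
  · dsimp only
    split_ifs with ht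
    exacts [ht, hmem.self_of_nhds]
  · exact hγ.congr_of_eventuallyEq (hmem.mono fun t ht => if_pos ht)

/-- `f` is a `C^k` immersion of the open set `U ⊆ ℝ²` into the surface `S`, that is, a local
parametrization of `S`; injectivity of `f` is not recorded. -/
structure IsLocalParametrization (k : ℕ∞) (S : Set E3) (f : E2 → E3) (U : Set E2) : Prop where
  isOpen : IsOpen U
  contDiffOn : ContDiffOn ℝ k f U
  mapsTo : MapsTo f U S
  injective_fderiv : ∀ x ∈ U, Function.Injective (fderiv ℝ f x)

theorem IsSurface.exists_isLocalParametrization {k : ℕ∞} (hS : IsSurface k S) (hp : p ∈ S) :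
    ∃ f U, IsLocalParametrization k S f U ∧ ∃ x ∈ U, f x = p := by
  obtain ⟨f, U, V, hU, -, hpV, hf, -, himage, hinj⟩ := hS p hp
  exact ⟨f, U, ⟨hU, hf, fun x hx => (himage.subset (mem_image_of_mem f hx)).1, hinj⟩,
    himage.superset ⟨hp, hpV⟩⟩

/-- `n` is a unit normal field along `S`, defined and differentiable near `S` so that its
derivative along `S` (the differential of the Gauss map) makes sense. -/
structure IsUnitNormal (S : Set E3) (n : E3 → E3) : Prop where
  differentiableAt : ∀ p ∈ S, DifferentiableAt ℝ n p
  norm_eq_one : ∀ p ∈ S, ‖n p‖ = 1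
  inner_eq_zero : ∀ p ∈ S, ∀ v, IsTangentAt S p v → ⟪n p, v⟫ = 0

namespace IsLocalParametrization

variable {k : ℕ∞} {f : E2 → E3} {U : Set E2} {x : E2} {n : E3 → E3}

theorem contDiffAt (hf : IsLocalParametrization k S f U) (hx : x ∈ U) : ContDiffAt ℝ k f x :=
  hf.contDiffOn.contDiffAt (hf.isOpen.mem_nhds hx)

theorem differentiableAt (hf : IsLocalParametrization k S f U) (hk : k ≠ 0) (hx : x ∈ U) :
    DifferentiableAt ℝ f x :=
  (hf.contDiffAt hx).differentiableAt (by exact_mod_cast hk)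

theorem isTangentAt_fderiv (hf : IsLocalParametrization k S f U) (hk : k ≠ 0) (hx : x ∈ U)
    (e : E2) : IsTangentAt S (f x) (fderiv ℝ f x e) := by
  have hline : HasDerivAt (fun t : ℝ => x + t • e) e 0 := by
    simpa using ((hasDerivAt_id (0 : ℝ)).smul_const e).const_add x
  have hzero : x + (0 : ℝ) • e = x := by simp
  have hf' : HasFDerivAt f (fderiv ℝ f x) (x + (0 : ℝ) • e) := by
    simpa only [hzero] using (hf.differentiableAt hk hx).hasFDerivAt
  have hmem : ∀ᶠ t : ℝ in 𝓝 0, x + t • e ∈ U :=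
    hline.continuousAt.eventually (hf.isOpen.mem_nhds (by simpa only [hzero] using hx))
  simpa only [Function.comp_apply, hzero] using isTangentAt_of_hasDerivAt_of_eventually_mem
    (hf'.comp_hasDerivAt 0 hline) (hmem.mono fun t ht => hf.mapsTo ht)

theorem range_fderiv (hf : IsLocalParametrization k S f U) (hk : k ≠ 0) (hn : IsUnitNormal S n)
    (hx : x ∈ U) : (fderiv ℝ f x : E2 →ₗ[ℝ] E3).range = (ℝ ∙ n (f x))ᗮ := by
  have hn0 : n (f x) ≠ 0 := norm_ne_zero_iff.1 (hn.norm_eq_one _ (hf.mapsTo hx) ▸ one_ne_zero)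
  have : Fact (Module.finrank ℝ E3 = 2 + 1) := ⟨finrank_euclideanSpace_fin⟩
  refine Submodule.eq_of_le_of_finrank_eq ?_ ?_
  · rintro _ ⟨e, rfl⟩
    exact Submodule.mem_orthogonal_singleton_iff_inner_right.2
      (hn.inner_eq_zero _ (hf.mapsTo hx) _ (hf.isTangentAt_fderiv hk hx e))
  · rw [LinearMap.finrank_range_of_inj (hf.injective_fderiv x hx), finrank_euclideanSpace_fin,
      Submodule.finrank_orthogonal_span_singleton (n := 2) hn0]

theorem exists_fderiv_eq (hf : IsLocalParametrization k S f U) (hk : k ≠ 0)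
    (hn : IsUnitNormal S n) (hx : x ∈ U) (hz : ⟪n (f x), z⟫ = 0) : ∃ e, fderiv ℝ f x e = z := by
  have hmem : z ∈ (fderiv ℝ f x : E2 →ₗ[ℝ] E3).range := by
    rwa [hf.range_fderiv hk hn hx, Submodule.mem_orthogonal_singleton_iff_inner_right]
  exact hmem

theorem ker_fderiv_comp_ne_bot {v : E3 → E3} (hf : IsLocalParametrization k S f U) (hk : k ≠ 0)
    (hn : IsUnitNormal S n) (hx : x ∈ U) (hv : DifferentiableAt ℝ v (f x))
    (hz : ⟪n (f x), z⟫ = 0) (hz0 : z ≠ 0) (hvz : fderiv ℝ v (f x) z = 0) :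
    (fderiv ℝ (v ∘ f) x : E2 →ₗ[ℝ] E3).ker ≠ ⊥ := by
  obtain ⟨e, rfl⟩ := hf.exists_fderiv_eq hk hn hx hz
  refine (Submodule.ne_bot_iff _).2 ⟨e, ?_, fun he => hz0 (by rw [he, map_zero])⟩
  rw [fderiv_comp x hv (hf.differentiableAt hk hx)]
  exact hvz

end IsLocalParametrization

namespace IsUnitNormal

variable {n : E3 → E3}

theorem isTangentAt_iff {k : ℕ∞} (hn : IsUnitNormal S n) (hS : IsSurface k S) (hk : k ≠ 0)
    (hp : p ∈ S) : IsTangentAt S p z ↔ ⟪n p, z⟫ = 0 := by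
  refine ⟨hn.inner_eq_zero p hp z, fun hz => ?_⟩
  obtain ⟨f, U, hf, x, hx, rfl⟩ := hS.exists_isLocalParametrization hp
  obtain ⟨e, rfl⟩ := hf.exists_fderiv_eq hk hn hx hz
  exact hf.isTangentAt_fderiv hk hx e

theorem inner_fderiv_comm {z' : E3} (hn : IsUnitNormal S n) (hS : IsSurface 2 S) (hp : p ∈ S)
    (hz : ⟪n p, z⟫ = 0) (hz' : ⟪n p, z'⟫ = 0) :
    ⟪fderiv ℝ n p z, z'⟫ = ⟪fderiv ℝ n p z', z⟫ := by
  obtain ⟨f, U, hf, x, hx, rfl⟩ := hS.exists_isLocalParametrization hp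
  obtain ⟨e, rfl⟩ := hf.exists_fderiv_eq two_ne_zero hn hx hz
  obtain ⟨e', rfl⟩ := hf.exists_fderiv_eq two_ne_zero hn hx hz'
  have hfx := hf.differentiableAt two_ne_zero hx
  have hnx := hn.differentiableAt _ hp
  have hnormal : ∀ᶠ y in 𝓝 x, ∀ e, ⟪(n ∘ f) y, fderiv ℝ f y e⟫ = 0 := by
    filter_upwards [hf.isOpen.mem_nhds hx] with y hy e
    exact hn.inner_eq_zero _ (hf.mapsTo hy) _ (hf.isTangentAt_fderiv two_ne_zero hy e)
  have hcomm := inner_fderiv_normal_comm (hf.contDiffAt hx) (hnx.comp x hfx) hnormal e e'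
  rwa [fderiv_comp x hnx hfx] at hcomm

end IsUnitNormal

end Tangent

section Irrotational

theorem isSymmetric_fderiv_of_curl3_eq_zero {v : E3 → E3} {p : E3} (h : curl3 v p = 0) :
    (fderiv ℝ v p : E3 →ₗ[ℝ] E3).IsSymmetric := by
  have hcurl : ∀ i, curl3 v p i = 0 := fun i => by rw [h]; rfl
  have h₀ : pder v 2 1 p - pder v 1 2 p = 0 := hcurl 0
  have h₁ : pder v 0 2 p - pder v 2 0 p = 0 := hcurl 1
  have h₂ : pder v 1 0 p - pder v 0 1 p = 0 := hcurl 2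
  have hpder : ∀ i j, pder v i j p = pder v j i p := by
    intro i j
    fin_cases i <;> fin_cases j <;> dsimp only [Fin.reduceFinMk, Fin.zero_eta, Fin.mk_one] <;>
      linarith
  rw [← LinearMap.isHermitian_toMatrix_iff (EuclideanSpace.basisFun (Fin 3) ℝ)]
  refine Matrix.IsHermitian.ext fun i j => ?_
  simpa [LinearMap.toMatrix_apply, pder, e3] using hpder j i

theorem isSymmetric_fderiv_of_mem_closure {F : Type*} [NormedAddCommGroup F]
    [InnerProductSpace ℝ F] {v : F → F} {Ω : Set F} {p : F}
    (hv : ContDiffAt ℝ 1 v p) (hp : p ∈ closure Ω)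
    (hsymm : ∀ q ∈ Ω, (fderiv ℝ v q : F →ₗ[ℝ] F).IsSymmetric) :
    (fderiv ℝ v p : F →ₗ[ℝ] F).IsSymmetric := by
  intro x y
  have hcont : ContinuousAt (fderiv ℝ v) p := hv.continuousAt_fderiv one_ne_zero
  have hleft : ContinuousAt (fun q => ⟪fderiv ℝ v q x, y⟫) p := by fun_prop
  have hright : ContinuousAt (fun q => ⟪x, fderiv ℝ v q y⟫) p := by fun_prop
  have := mem_closure_iff_nhdsWithin_neBot.1 hp
  exact tendsto_nhds_unique_of_eventuallyEq (hleft.mono_left nhdsWithin_le_nhds)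
    (hright.mono_left nhdsWithin_le_nhds)
    (eventually_nhdsWithin_of_forall fun q hq => hsymm q hq x y)

end Irrotational

section VortexSheet

variable {S : Set E3} {n u w : E3 → E3}

/-- `v` is the trace on `S` of an irrotational flow tangent to `S`, where `n` is normal to `S`:
it is `C¹` near `S` with symmetric Jacobian along `S` (zero vorticity) and has no normal
component there. -/
structure IsIrrotationalTangentField (S : Set E3) (n v : E3 → E3) : Prop where
  contDiffAt : ∀ p ∈ S, ContDiffAt ℝ 1 v p
  isSymmetric_fderiv : ∀ p ∈ S, (fderiv ℝ v p : E3 →ₗ[ℝ] E3).IsSymmetric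
  inner_normal : ∀ p ∈ S, ⟪n p, v p⟫ = 0

namespace IsIrrotationalTangentField

theorem of_curl3_eq_zero {v : E3 → E3} {Ω : Set E3}
    (hv : ∃ W, IsOpen W ∧ Ω ∪ S ⊆ W ∧ ContDiffOn ℝ 1 v W) (hΩ : S ⊆ closure Ω)
    (hcurl : ∀ p ∈ Ω, curl3 v p = 0) (hnv : ∀ p ∈ S, ⟪n p, v p⟫ = 0) :
    IsIrrotationalTangentField S n v := by
  obtain ⟨W, hW, hSW, hvW⟩ := hv
  have hv' : ∀ p ∈ S, ContDiffAt ℝ 1 v p := fun p hp =>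
    hvW.contDiffAt (hW.mem_nhds (hSW (Or.inr hp)))
  exact ⟨hv', fun p hp => isSymmetric_fderiv_of_mem_closure (hv' p hp) (hΩ hp) fun q hq =>
    isSymmetric_fderiv_of_curl3_eq_zero (hcurl q hq), hnv⟩

theorem differentiableAt {p : E3} (hu : IsIrrotationalTangentField S n u) (hp : p ∈ S) :
    DifferentiableAt ℝ u p :=
  (hu.contDiffAt p hp).differentiableAt one_ne_zero

theorem add (hu : IsIrrotationalTangentField S n u) (hw : IsIrrotationalTangentField S n w) :
    IsIrrotationalTangentField S n (u + w) where
  contDiffAt p hp := (hu.contDiffAt p hp).add (hw.contDiffAt p hp)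
  isSymmetric_fderiv p hp := by
    rw [fderiv_add (hu.differentiableAt hp) (hw.differentiableAt hp)]
    exact (hu.isSymmetric_fderiv p hp).add (hw.isSymmetric_fderiv p hp)
  inner_normal p hp := by
    rw [Pi.add_apply, inner_add_right, hu.inner_normal p hp, hw.inner_normal p hp, add_zero]

theorem sub (hu : IsIrrotationalTangentField S n u) (hw : IsIrrotationalTangentField S n w) :
    IsIrrotationalTangentField S n (u - w) where
  contDiffAt p hp := (hu.contDiffAt p hp).sub (hw.contDiffAt p hp)
  isSymmetric_fderiv p hp := by
    rw [fderiv_sub (hu.differentiableAt hp) (hw.differentiableAt hp)]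
    exact (hu.isSymmetric_fderiv p hp).sub (hw.isSymmetric_fderiv p hp)
  inner_normal p hp := by
    rw [Pi.sub_apply, inner_sub_right, hu.inner_normal p hp, hw.inner_normal p hp, sub_zero]

theorem inner_normal_fderiv {p z : E3} (hu : IsIrrotationalTangentField S n u)
    (hn : IsUnitNormal S n) (hp : p ∈ S) (hz : IsTangentAt S p z) :
    ⟪n p, fderiv ℝ u p z⟫ = -⟪fderiv ℝ n p z, u p⟫ :=
  hz.inner_fderiv_eq_neg (hn.differentiableAt p hp) (hu.differentiableAt hp) hu.inner_normal

theorem fderiv_apply_eq_zero_symm {p : E3} {c : ℝ} (hS : IsSurface 2 S) (hn : IsUnitNormal S n)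
    (hu : IsIrrotationalTangentField S n u) (hw : IsIrrotationalTangentField S n w)
    (huw : ∀ q ∈ S, ⟪u q, w q⟫ = c) (hp : p ∈ S) (h : fderiv ℝ u p (w p) = 0) :
    fderiv ℝ w p (u p) = 0 := by
  set z := fderiv ℝ w p (u p)
  have htangent : ∀ {y}, IsTangentAt S p y ↔ ⟪n p, y⟫ = 0 := hn.isTangentAt_iff hS two_ne_zero hp
  have hz_normal : ⟪n p, z⟫ = 0 := calc
    ⟪n p, z⟫ = -⟪fderiv ℝ n p (u p), w p⟫ :=
      hw.inner_normal_fderiv hn hp (htangent.2 (hu.inner_normal p hp))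
    _ = -⟪fderiv ℝ n p (w p), u p⟫ := by
      rw [hn.inner_fderiv_comm hS hp (hu.inner_normal p hp) (hw.inner_normal p hp)]
    _ = ⟪n p, fderiv ℝ u p (w p)⟫ :=
      (hu.inner_normal_fderiv hn hp (htangent.2 (hw.inner_normal p hp))).symm
    _ = 0 := by rw [h, inner_zero_right]
  have hz_self : ⟪z, z⟫ = 0 := calc
    ⟪z, z⟫ = ⟪u p, fderiv ℝ w p z⟫ := hw.isSymmetric_fderiv p hp (u p) z
    _ = -⟪fderiv ℝ u p z, w p⟫ := (htangent.2 hz_normal).inner_fderiv_eq_neg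
      (hu.differentiableAt hp) (hw.differentiableAt hp) huw
    _ = -⟪z, fderiv ℝ u p (w p)⟫ := congrArg Neg.neg (hu.isSymmetric_fderiv p hp z (w p))
    _ = 0 := by rw [h, inner_zero_right, neg_zero]
  exact inner_self_eq_zero.1 hz_self

theorem fderiv_normal_eq_zero {p z : E3} (hn : IsUnitNormal S n)
    (hu : IsIrrotationalTangentField S n u) (hw : IsIrrotationalTangentField S n w) (hp : p ∈ S)
    (huw : ⟪u p, w p⟫ = 0) (hu0 : u p ≠ 0) (hw0 : w p ≠ 0) (hz : IsTangentAt S p z)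
    (hzu : ⟪n p, fderiv ℝ u p z⟫ = 0) (hzw : ⟪n p, fderiv ℝ w p z⟫ = 0) :
    fderiv ℝ n p z = 0 := by
  have hDn_u : ⟪fderiv ℝ n p z, u p⟫ = 0 := by
    rwa [hu.inner_normal_fderiv hn hp hz, neg_eq_zero] at hzu
  have hDn_w : ⟪fderiv ℝ n p z, w p⟫ = 0 := by
    rwa [hw.inner_normal_fderiv hn hp hz, neg_eq_zero] at hzw
  have hDn_n : ⟪fderiv ℝ n p z, n p⟫ = 0 := by
    have hnp := hn.differentiableAt p hp
    have hnorm : ∀ q ∈ S, ⟪n q, n q⟫ = 1 := fun q hq => by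
      rw [real_inner_self_eq_norm_sq, hn.norm_eq_one q hq, one_pow]
    linarith [hz.inner_fderiv_eq_neg hnp hnp hnorm, real_inner_comm (n p) (fderiv ℝ n p z)]
  rw [← inner_self_eq_zero (𝕜 := ℝ), inner_eq_of_orthogonal_frame finrank_euclideanSpace_fin hu0
    hw0 (hn.norm_eq_one p hp) huw (hu.inner_normal p hp) (hw.inner_normal p hp), hDn_u, hDn_w,
    hDn_n]
  ring

theorem exists_fderiv_normal_eq_zero_or_eq_zero (hS : IsSurface 2 S) (hn : IsUnitNormal S n)
    (hu : IsIrrotationalTangentField S n u) (hw : IsIrrotationalTangentField S n w)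
    (huw : ∀ p ∈ S, ⟪u p, w p⟫ = 0) (hDu : ∀ p ∈ S, fderiv ℝ u p (w p) = 0) {q : E3}
    (hq : q ∈ S) :
    (∃ z, z ≠ 0 ∧ IsTangentAt S q z ∧ fderiv ℝ n q z = 0) ∨ u q = 0 ∨ w q = 0 := by
  by_contra! h
  obtain ⟨hDn, hu0, hw0⟩ := h
  obtain ⟨f, U, hf, x, hx, rfl⟩ := hS.exists_isLocalParametrization hq
  have hfx : ContDiffAt ℝ 1 f x := (hf.contDiffAt hx).of_le (by norm_num)
  have huf : ContDiffAt ℝ 1 (u ∘ f) x := (hu.contDiffAt _ hq).comp x hfx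
  have hwf : ContDiffAt ℝ 1 (w ∘ f) x := (hw.contDiffAt _ hq).comp x hfx
  have hU : ∀ᶠ y in 𝓝 x, y ∈ U := hf.isOpen.mem_nhds hx
  have hker_u : ∀ᶠ y in 𝓝 x, (fderiv ℝ (u ∘ f) y : E2 →ₗ[ℝ] E3).ker ≠ ⊥ := by
    filter_upwards [hU, hwf.continuousAt.eventually_ne hw0] with y hy hwy
    have hfy := hf.mapsTo hy
    exact hf.ker_fderiv_comp_ne_bot two_ne_zero hn hy (hu.differentiableAt hfy)
      (hw.inner_normal _ hfy) hwy (hDu _ hfy)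
  have hker_w : ∀ᶠ y in 𝓝 x, (fderiv ℝ (w ∘ f) y : E2 →ₗ[ℝ] E3).ker ≠ ⊥ := by
    filter_upwards [hU, huf.continuousAt.eventually_ne hu0] with y hy huy
    have hfy := hf.mapsTo hy
    exact hf.ker_fderiv_comp_ne_bot two_ne_zero hn hy (hw.differentiableAt hfy)
      (hu.inner_normal _ hfy) huy (fderiv_apply_eq_zero_symm hS hn hu hw huw hfy (hDu _ hfy))
  obtain ⟨e, he, heu, hew⟩ := exists_ne_zero_inner_fderiv_eq_zero finrank_euclideanSpace_fin
    finrank_euclideanSpace_fin huf hwf hker_u hker_w (hU.mono fun y hy => huw _ (hf.mapsTo hy))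
    hu0 hw0 (hn.norm_eq_one _ hq) (hu.inner_normal _ hq) (hw.inner_normal _ hq)
  have hdf := hfx.differentiableAt one_ne_zero
  rw [fderiv_comp x (hu.differentiableAt hq) hdf] at heu
  rw [fderiv_comp x (hw.differentiableAt hq) hdf] at hew
  have hz := hf.isTangentAt_fderiv two_ne_zero hx e
  exact hDn _ ((map_ne_zero_iff _ (hf.injective_fderiv x hx)).2 he) hz
    (fderiv_normal_eq_zero hn hu hw hq (huw _ hq) hu0 hw0 hz heu hew)

end IsIrrotationalTangentField

theorem statement5_general {vm vp : E3 → E3} (hS : IsSurface 2 S) (hn : IsUnitNormal S n)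
    (hvm : IsIrrotationalTangentField S n vm) (hvp : IsIrrotationalTangentField S n vp)
    (hstrain : ∀ p ∈ S, (fderiv ℝ vp p + fderiv ℝ vm p) (vp p - vm p) = 0)
    (hnorm : ∀ p ∈ S, ‖vp p‖ ^ 2 = ‖vm p‖ ^ 2) :
    ∀ q ∈ S,
      (∃ w : E3, w ≠ 0 ∧ IsTangentAt S q w ∧ fderiv ℝ n q w = 0) ∨
      vp q = vm q ∨ vp q = -vm q := by
  intro q hq
  have horth : ∀ p ∈ S, ⟪(vp + vm) p, (vp - vm) p⟫ = 0 := fun p hp =>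
    (real_inner_add_sub_eq_zero_iff _ _).2
      ((sq_eq_sq₀ (norm_nonneg _) (norm_nonneg _)).1 (hnorm p hp))
  have hD : ∀ p ∈ S, fderiv ℝ (vp + vm) p ((vp - vm) p) = 0 := fun p hp => by
    rw [fderiv_add (hvp.differentiableAt hp) (hvm.differentiableAt hp)]
    exact hstrain p hp
  rcases (hvp.add hvm).exists_fderiv_normal_eq_zero_or_eq_zero hS hn (hvp.sub hvm) horth hD hq
    with hDn | hsum | hdiff
  · exact .inl hDn
  · exact .inr (.inr (eq_neg_of_add_eq_zero_left hsum))
  · exact .inr (.inl (sub_eq_zero.1 hdiff))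

end VortexSheet

/-- Let `S ⊂ ℝ³` be a smooth embedded surface with unit normal (Gauss map)
`n`, and let `(vm, vp)` satisfy the CVS conditions (1)–(5) with `|vp|² = |vm|²` on `S`.
Then at every point `q ∈ S` at least one of the following holds:
(a) the Gauss curvature of `S` vanishes at `q`, i.e. the differential of the Gauss map at `q`
is singular on the tangent plane (there is a nonzero tangent vector killed by `Dn`);
(b) `vp q = vm q`; (c) `vp q = -vm q`. -/
theorem statement5
    (S Ωm Ωp : Set E3) (vm vp : E3 → E3) (n : E3 → E3) (W : Set E3)
    (hS : IsSurface 2 S)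
    -- `n` is a C¹ unit normal field near `S`
    (hW : IsOpen W) (hSW : S ⊆ W) (hn : ContDiffOn ℝ 1 n W)
    (hn_unit : ∀ p ∈ S, ‖n p‖ = 1)
    (hn_orth : ∀ p ∈ S, ∀ v, IsTangentAt S p v → ⟪n p, v⟫ = 0)
    (hCVS : CVSPair S Ωm Ωp vm vp)
    (hnorm : ∀ p ∈ S, ‖vp p‖ ^ 2 = ‖vm p‖ ^ 2) :
    ∀ q ∈ S,
      (∃ w : E3, w ≠ 0 ∧ IsTangentAt S q w ∧ fderiv ℝ n q w = 0) ∨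
      vp q = vm q ∨ vp q = -vm q := by
  have hn' : IsUnitNormal S n := ⟨fun p hp =>
    (hn.contDiffAt (hW.mem_nhds (hSW hp))).differentiableAt one_ne_zero, hn_unit, hn_orth⟩
  have hvm : IsIrrotationalTangentField S n vm := .of_curl3_eq_zero hCVS.smoothm hCVS.clm
    hCVS.curlm fun p hp => hn_orth p hp _ (hCVS.tangentm p hp)
  have hvp : IsIrrotationalTangentField S n vp := .of_curl3_eq_zero hCVS.smoothp hCVS.clp
    hCVS.curlp fun p hp => hn_orth p hp _ (hCVS.tangentp p hp)
  exact statement5_general hS hn' hvm hvp hCVS.strain hnorm
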